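/- For every T ⊆ 𝔹, one has 𝒟_T = {κ ∈ ℚ^𝔹 : L_{T,β}(κ) ≥ 0 for all β ∈ 𝔹 − T}. -/

import Mathlib

/- Setting: `B` is the finite nonempty set 𝔹 equipped with a permutation `σ` (Frobenius),
and `p` is a prime.  Weights live in `ℚ^𝔹 = (B → ℚ)`.  The orbits `𝔹_𝔭` of `σ` are the sets
`orbit σ β`, and for `T ⊆ 𝔹` we have `T_𝔭 = T ∩ orbit σ β`. -/

open scoped Classical

noncomputable section

namespace GO

variable {B : Type*} [Fintype B] [DecidableEq B]

/-- The standard basis vector `e_β` of `ℚ^𝔹`. -/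
def e (β : B) : B → ℚ := fun τ => if τ = β then 1 else 0

/-- `β'` lies in the `σ`-orbit of `β`. -/
def sameOrbit (σ : Equiv.Perm B) (β β' : B) : Prop := ∃ n : ℕ, (σ ^ n) β = β'

/-- The `σ`-orbit `𝔹_𝔭` of `β`. -/
def orbit (σ : Equiv.Perm B) (β : B) : Set B := {τ | sameOrbit σ β τ}

/-- `|𝔹_𝔭|`, the cardinality of the orbit of `β`. -/
def orbitCard (σ : Equiv.Perm B) (β : B) : ℕ := (orbit σ β).ncard

/-- For `β`, `β'` in the same orbit: the unique `n` with `0 < n ≤ |𝔹_𝔭|` and `σ^n β' = β`,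
realized as the least positive `n` with `σ^n β' = β`. -/
def steps (σ : Equiv.Perm B) (β' β : B) : ℕ := sInf {n : ℕ | 0 < n ∧ (σ ^ n) β' = β}

/-- For `β`, `β'` in the same orbit: the unique `n` with `0 ≤ n < |𝔹_𝔭|` and `σ^n β = β'`. -/
def steps0 (σ : Equiv.Perm B) (β β' : B) : ℕ := sInf {n : ℕ | (σ ^ n) β = β'}

/-- `h_β^{β'} = -e_β + p^n e_{β'}` where `β = σ^n β'` with `0 < n ≤ |𝔹_𝔭|`. -/
def hvec (σ : Equiv.Perm B) (p : ℕ) (β β' : B) : B → ℚ :=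
  -(e β) + ((p : ℚ) ^ steps σ β' β) • e β'

/-- `b_β^{β'} = e_β + p^n e_{β'}` where `β = σ^n β'` with `0 < n ≤ |𝔹_𝔭|`. -/
def bvec (σ : Equiv.Perm B) (p : ℕ) (β β' : B) : B → ℚ :=
  (e β) + ((p : ℚ) ^ steps σ β' β) • e β'

/-- `h_β = -e_β + p e_{σ⁻¹ β}`. -/
def hsimple (σ : Equiv.Perm B) (p : ℕ) (β : B) : B → ℚ := -(e β) + (p : ℚ) • e (σ⁻¹ β)

/-- `b_β = e_β + p e_{σ⁻¹ β}`. -/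
def bsimple (σ : Equiv.Perm B) (p : ℕ) (β : B) : B → ℚ := (e β) + (p : ℚ) • e (σ⁻¹ β)

/-- The `ℚ^{≥0}`-cone generated by a set `S` of vectors: all finite nonnegative rational
linear combinations of elements of `S`. -/
def cone {V : Type*} [AddCommMonoid V] [Module ℚ V] (S : Set V) : Set V :=
  {x | ∃ (n : ℕ) (c : Fin n → ℚ) (v : Fin n → V),
    (∀ i, 0 ≤ c i) ∧ (∀ i, v i ∈ S) ∧ x = ∑ i, c i • v i}

/-- A chain in `T` (automatically contained in a single orbit, so this is the notion of a
chain in `T_𝔭` for `T_𝔭 ⊊ 𝔹_𝔭`): `C = {σ^{-i}β : 0 ≤ i ≤ m} ⊆ T` with `σβ ∉ T` and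
`σ^{-m-1}β ∉ T`. -/
def IsChainIn (σ : Equiv.Perm B) (T : Set B) (C : Set B) : Prop :=
  ∃ (β : B) (m : ℕ), σ β ∉ T ∧ (σ⁻¹ ^ (m + 1)) β ∉ T ∧
    (∀ i ≤ m, (σ⁻¹ ^ i) β ∈ T) ∧ C = {τ | ∃ i ≤ m, τ = (σ⁻¹ ^ i) β}

/-- `C̃` for a chain `C`: equals `C` if `m` is odd (i.e. `|C| = m+1` is even), and
`C ∪ {σ^{-m-1}β} = C ∪ σ⁻¹(C)` if `m` is even (i.e. `|C|` odd). -/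
def chainExt (σ : Equiv.Perm B) (C : Set B) : Set B :=
  if Odd C.ncard then C ∪ (⇑σ⁻¹ '' C) else C

/-- `T̃ = ⋃_𝔭 T̃_𝔭`: the union of `T` with the extensions `C̃` of all chains `C` in `T`.
(For orbits with `T_𝔭 = 𝔹_𝔭` there are no chains and `T̃_𝔭 = 𝔹_𝔭 = T_𝔭`.) -/
def tilde (σ : Equiv.Perm B) (T : Set B) : Set B :=
  T ∪ ⋃ (C : Set B) (_ : IsChainIn σ T C), chainExt σ C

/-- `μ_β`: the least `i > 0` with `σ^i β ∉ T` if `T_𝔭 ≠ 𝔹_𝔭`, and `0` if `T_𝔭 = 𝔹_𝔭`. -/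
def mu (σ : Equiv.Perm B) (T : Set B) (β : B) : ℕ :=
  if orbit σ β ⊆ T then 0 else sInf {i : ℕ | 0 < i ∧ (σ ^ i) β ∉ T}

/-- `n_β`: the least `i > 0` with `σ^i β ∉ T̃` (meaningful when `T̃_𝔭 ≠ 𝔹_𝔭`). -/
def nn (σ : Equiv.Perm B) (T : Set B) (β : B) : ℕ :=
  sInf {i : ℕ | 0 < i ∧ (σ ^ i) β ∉ tilde σ T}

/-- `ν_β`: the least `i ≥ 0` with `σ^{-i} β ∉ T` (meaningful when `T_𝔭 ≠ 𝔹_𝔭`). -/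
def nu (σ : Equiv.Perm B) (T : Set B) (β : B) : ℕ :=
  sInf {i : ℕ | (σ⁻¹ ^ i) β ∉ T}

/-- `𝒯(T_𝔭) = (𝔹_𝔭 − T̃_𝔭) ∪ σ(T̃_𝔭 − T_𝔭)`, taken globally (union over all `𝔭`). -/
def Tscr (σ : Equiv.Perm B) (T : Set B) : Set B :=
  (tilde σ T)ᶜ ∪ (⇑σ '' (tilde σ T \ T))

/-- The generating set `⋃_𝔭 𝒢(T_𝔭)`:
`{h_β^{β'} : β ∈ ℋ(T_𝔭), β' ∈ 𝒯(T_𝔭)} ∪ {±b_β : β ∈ T_𝔭}` over all `𝔭`. -/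
def Dgen (σ : Equiv.Perm B) (p : ℕ) (T : Set B) : Set (B → ℚ) :=
  {v | ∃ β β', β ∉ T ∧ β' ∈ Tscr σ T ∧ sameOrbit σ β β' ∧ v = hvec σ p β β'}
  ∪ {v | ∃ β ∈ T, v = bsimple σ p β ∨ v = -(bsimple σ p β)}

/-- The cone `𝒟_T`. -/
def D (σ : Equiv.Perm B) (p : ℕ) (T : Set B) : Set (B → ℚ) := cone (Dgen σ p T)

/-- `h_{σ^{n_β}β}^{β} = -e_{σ^{n_β}β} + p^{n_β} e_β`. -/
def fH (σ : Equiv.Perm B) (p : ℕ) (T : Set B) (β : B) : B → ℚ :=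
  -(e ((σ ^ nn σ T β) β)) + ((p : ℚ) ^ nn σ T β) • e β

/-- `b_{σ^{n_β}β}^{β} = e_{σ^{n_β}β} + p^{n_β} e_β`. -/
def fB (σ : Equiv.Perm B) (p : ℕ) (T : Set B) (β : B) : B → ℚ :=
  (e ((σ ^ nn σ T β) β)) + ((p : ℚ) ^ nn σ T β) • e β

/-- The generating set `⋃_𝔭 𝒢′(T_𝔭)`:
if `𝔹_𝔭 − T̃_𝔭 ≠ ∅` it is `{h_{σ^{n_β}β}^β : β ∈ 𝔹_𝔭 − T̃_𝔭} ∪ {−b_{σ^{n_β}β}^β : β ∈ T̃_𝔭 − T_𝔭}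
∪ {±b_β : β ∈ T_𝔭}`, and if `𝔹_𝔭 = T̃_𝔭` it is `{−e_β : β ∈ 𝔹_𝔭 − T_𝔭} ∪ {±b_β : β ∈ T_𝔭}`. -/
def D'gen (σ : Equiv.Perm B) (p : ℕ) (T : Set B) : Set (B → ℚ) :=
  {v | ∃ β, β ∉ tilde σ T ∧ v = fH σ p T β}
  ∪ {v | ∃ β, β ∈ tilde σ T ∧ β ∉ T ∧ ¬ orbit σ β ⊆ tilde σ T ∧ v = -(fB σ p T β)}
  ∪ {v | ∃ β, β ∉ T ∧ orbit σ β ⊆ tilde σ T ∧ v = -(e β)}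
  ∪ {v | ∃ β ∈ T, v = bsimple σ p β ∨ v = -(bsimple σ p β)}

/-- The cone `𝒟′_T`. -/
def D' (σ : Equiv.Perm B) (p : ℕ) (T : Set B) : Set (B → ℚ) := cone (D'gen σ p T)

/-- `f_β(T)` for `β ∉ T`: `h_{σ^{n_β}β}^β` if `β ∈ 𝔹_𝔭 − T̃_𝔭`; `−b_{σ^{n_β}β}^β` if
`β ∈ T̃_𝔭 − T_𝔭` and `𝔹_𝔭 ≠ T̃_𝔭`; and `−(1+p^{|𝔹_𝔭|}) e_β` if `𝔹_𝔭 = T̃_𝔭`. -/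
def fvec (σ : Equiv.Perm B) (p : ℕ) (T : Set B) (β : B) : B → ℚ :=
  if orbit σ β ⊆ tilde σ T then -((1 + (p : ℚ) ^ orbitCard σ β) • e β)
  else if β ∈ tilde σ T then -(fB σ p T β) else fH σ p T β

/-- `𝔹(T) = ⋃_𝔭 𝔹_𝔭(T)`: `β ∈ 𝔹(T)` iff `β ∉ T`, the set `𝔹_𝔭 − T̃_𝔭` is nonempty, and
`𝔹_𝔭 − T̃_𝔭 ≠ {β}` (this encodes all three cases of the definition of `𝔹_𝔭(T)`). -/
def BT (σ : Equiv.Perm B) (T : Set B) : Set B :=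
  {β | β ∉ T ∧ (orbit σ β \ tilde σ T).Nonempty ∧ orbit σ β \ tilde σ T ≠ {β}}

/-- The sign function `ε_T : 𝔹 → {−1,0,1}`. -/
def epsT (σ : Equiv.Perm B) (T : Set B) (β : B) : ℚ :=
  if orbit σ β ⊆ T then 0
  else if β ∈ tilde σ T then (-1 : ℚ) ^ (mu σ T β - 1) else 1

/-- `L^ε[β, β'](κ) = Σ_{0 ≤ i ≤ n} ε(σ^iβ) p^i k_{σ^iβ}`, where `β' = σ^n β` with
`0 ≤ n < |𝔹_𝔭|`. -/
def Lfun (σ : Equiv.Perm B) (p : ℕ) (ε : B → ℚ) (β β' : B) (κ : B → ℚ) : ℚ :=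
  ∑ i ∈ Finset.range (steps0 σ β β' + 1), ε ((σ ^ i) β) * (p : ℚ) ^ i * κ ((σ ^ i) β)

/-- `L^ε[β] = L^ε[β, σ⁻¹β]`. -/
def Lfun1 (σ : Equiv.Perm B) (p : ℕ) (ε : B → ℚ) (β : B) (κ : B → ℚ) : ℚ :=
  Lfun σ p ε β (σ⁻¹ β) κ

/-- `L_{T,β}` for `β ∈ 𝔹 − T`: `L^{ε_T}[σ^{μ_β}β]` if `β ∈ 𝔹 − T̃`, and
`L^{ε_T}[β, σ^{μ_β−1}β]` if `β ∈ T̃ − T`. -/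
def LT (σ : Equiv.Perm B) (p : ℕ) (T : Set B) (β : B) (κ : B → ℚ) : ℚ :=
  if β ∈ tilde σ T then Lfun σ p (epsT σ T) β ((σ ^ (mu σ T β - 1)) β) κ
  else Lfun1 σ p (epsT σ T) ((σ ^ mu σ T β) β) κ

/-- `ε_{T,f_β}`: negates `ε_T` on `{β, σβ, …, σ^{μ_β−1}β}`. -/
def epsTf (σ : Equiv.Perm B) (T : Set B) (β τ : B) : ℚ :=
  if ∃ i < mu σ T β, τ = (σ ^ i) β then -(epsT σ T τ) else epsT σ T τ

/-- `L_{T,f_β,τ}` for `β ∈ 𝔹(T)` and `τ ∈ 𝔹 − (T ∪ {σ^{n_β}β})`, with `β′ = σ^{n_β}β` and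
`β̃ = σ^{μ_{β′}}β′`. -/
def LTf (σ : Equiv.Perm B) (p : ℕ) (T : Set B) (β τ : B) (κ : B → ℚ) : ℚ :=
  if τ = β then
    (if β ∈ tilde σ T then
      Lfun1 σ p (epsTf σ T β) ((σ ^ mu σ T ((σ ^ nn σ T β) β)) ((σ ^ nn σ T β) β)) κ
    else
      Lfun σ p (epsTf σ T β) β (σ⁻¹ ((σ ^ mu σ T ((σ ^ nn σ T β) β)) ((σ ^ nn σ T β) β))) κ)
  else
    (if τ ∈ tilde σ T then LT σ p T τ κ
     else Lfun1 σ p (epsTf σ T β) ((σ ^ mu σ T τ) τ) κ)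

/-- `𝒟_{T,f_β} = {κ : L_{T,f_β,τ}(κ) ≥ 0 for all τ ∈ 𝔹 − (T ∪ {σ^{n_β}β})}`. -/
def Df (σ : Equiv.Perm B) (p : ℕ) (T : Set B) (β : B) : Set (B → ℚ) :=
  {κ | ∀ τ, τ ∉ T → τ ≠ (σ ^ nn σ T β) β → 0 ≤ LTf σ p T β τ κ}

/-- `i_T : ℚ^𝔹 → ℚ^{𝔹−T}`, the linear map with `i_T(e_β) = 0` if `T_𝔭 = 𝔹_𝔭` and
`i_T(e_β) = (−p)^{ν_β} e_{σ^{−ν_β}β}` otherwise. -/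
def iT (σ : Equiv.Perm B) (p : ℕ) (T : Set B) (κ : B → ℚ) : {β : B // β ∉ T} → ℚ :=
  fun β₀ => ∑ β : B, κ β *
    (if orbit σ β ⊆ T then 0
     else if (σ⁻¹ ^ nu σ T β) β = β₀.1 then (-(p : ℚ)) ^ nu σ T β else 0)

/-- Restriction to `ℚ^{𝔹−T}` of a vector of `ℚ^𝔹` (used for vectors supported on `𝔹 − T`). -/
def res (T : Set B) (v : B → ℚ) : {β : B // β ∉ T} → ℚ := fun β => v β.1

/-- The generating set `𝒢^{T-red}(T) = ⋃_𝔭 𝒢_𝔭^{T-red}(T)` of the reduced cone. -/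
def Gred (σ : Equiv.Perm B) (p : ℕ) (T : Set B) : Set ({β : B // β ∉ T} → ℚ) :=
  {v | ∃ β, β ∉ tilde σ T ∧ v = res T (fH σ p T β)}
  ∪ {v | ∃ β, β ∈ tilde σ T ∧ β ∉ T ∧ ¬ orbit σ β ⊆ tilde σ T ∧ v = res T (-(fB σ p T β))}
  ∪ {v | ∃ β, β ∉ T ∧ orbit σ β ⊆ tilde σ T ∧ v = res T (-(e β))}

/-- The minimal cone `𝒞^min_T = i_T(𝒟_T ∩ ⋂_{β ∈ 𝔹(T)} 𝒟_{T,f_β}) ⊆ ℚ^{𝔹−T}`. -/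
def Cmin (σ : Equiv.Perm B) (p : ℕ) (T : Set B) : Set ({β : B // β ∉ T} → ℚ) :=
  iT σ p T '' (D σ p T ∩ {κ | ∀ β ∈ BT σ T, κ ∈ Df σ p T β})

/-- `g_β`: `b_β` if `β ∈ T_𝔭`; `−e_β` if `β ∈ T̃_𝔭 − T_𝔭` and `𝔹_𝔭 = T̃_𝔭`;
`−b_{σ^{n_β}β}^β` if `β ∈ T̃_𝔭 − T_𝔭` and `𝔹_𝔭 ≠ T̃_𝔭`; `h_{σ^{n_β}β}^β` if `β ∈ 𝔹_𝔭 − T̃_𝔭`. -/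
def gvec (σ : Equiv.Perm B) (p : ℕ) (T : Set B) (β : B) : B → ℚ :=
  if β ∈ T then bsimple σ p β
  else if orbit σ β ⊆ tilde σ T then -(e β)
  else if β ∈ tilde σ T then -(fB σ p T β)
  else fH σ p T β

/-- The map `σ̄ : β ↦ σ^{n_β} β`. -/
def sigbar (σ : Equiv.Perm B) (T : Set B) (β : B) : B := (σ ^ nn σ T β) β

/-- `h_β = -e_β + p e_{σ⁻¹β}` as an element of `ℤ^𝔹`. -/
def hZ (σ : Equiv.Perm B) (p : ℕ) (β : B) : B → ℤ :=
  fun τ => (if τ = β then -1 else 0) + (if τ = σ⁻¹ β then (p : ℤ) else 0)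

end GO

end

/-!
The vectors `g_β` (`β ∈ 𝔹`) form a basis of `ℚ^𝔹` contained in `𝒟_T`; moreover `-g_β = -b_β ∈ 𝒟_T`
for `β ∈ T`. For `δ ∉ T` the form `L_{T,δ}` is nonnegative on the generators of `𝒟_T`, kills every
`g_β` with `β ≠ δ`, and is positive on `g_δ`. Hence, writing `κ = ∑ c_β g_β`, the sign of
`L_{T,δ}(κ)` is the sign of `c_δ`, and nonnegativity of all the `c_δ` with `δ ∉ T` is exactly what
puts `κ` into the cone.

The values of `L_{T,δ}` rest on two facts about signs: an element `β ∉ T` lies in `T̃` if and only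
if `μ_β` is even, and `ε_T(σ⁻¹β) = -ε_T(β)` for `β ∈ T`, so that `L_{T,δ}(b_β)` telescopes to
zero.
-/

namespace GO

open Function

section Cone

variable {V : Type*} [AddCommGroup V] [Module ℚ V]

theorem cone_eq_hull (S : Set V) : cone S = (PointedCone.hull ℚ S : Set V) := by
  ext x
  rw [SetLike.mem_coe, PointedCone.hull, Submodule.mem_span_set']
  constructor
  · rintro ⟨n, c, v, hc, hv, rfl⟩
    exact ⟨n, fun i ↦ ⟨c i, hc i⟩, fun i ↦ ⟨v i, hv i⟩, rfl⟩
  · rintro ⟨n, c, v, rfl⟩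
    exact ⟨n, fun i ↦ c i, fun i ↦ v i, fun i ↦ (c i).2, fun i ↦ (v i).2, rfl⟩

theorem subset_cone (S : Set V) : S ⊆ cone S :=
  cone_eq_hull S ▸ PointedCone.subset_hull

theorem add_mem_cone {S : Set V} {x y : V} (hx : x ∈ cone S) (hy : y ∈ cone S) :
    x + y ∈ cone S := by
  rw [cone_eq_hull] at *
  exact add_mem hx hy

theorem smul_mem_cone {S : Set V} {c : ℚ} {x : V} (hc : 0 ≤ c) (hx : x ∈ cone S) :
    c • x ∈ cone S := by
  rw [cone_eq_hull] at *
  exact PointedCone.smul_mem _ hc hx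

theorem sum_mem_cone {S : Set V} {ι : Type*} {s : Finset ι} {x : ι → V}
    (hx : ∀ i ∈ s, x i ∈ cone S) : ∑ i ∈ s, x i ∈ cone S := by
  rw [cone_eq_hull] at *
  exact sum_mem hx

theorem nonneg_of_mem_cone {S : Set V} {f : Module.Dual ℚ V} (hf : ∀ v ∈ S, 0 ≤ f v) {x : V}
    (hx : x ∈ cone S) : 0 ≤ f x := by
  obtain ⟨n, c, v, hc, hv, rfl⟩ := hx
  simp only [map_sum, map_smul, smul_eq_mul]
  exact Finset.sum_nonneg fun i _ ↦ mul_nonneg (hc i) (hf _ (hv i))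

end Cone

section DualFamily

variable {R V ι : Type*} [CommRing R] [AddCommGroup V] [Module R V]
  {T : Set ι} {g : ι → V} {L : ι → Module.Dual R V}

theorem dual_linearCombination {i : ι} (hne : ∀ j ≠ i, L i (g j) = 0) (c : ι →₀ R) :
    L i (Finsupp.linearCombination R g c) = c i * L i (g i) := by
  rw [Finsupp.linearCombination_apply, map_finsuppSum, Finsupp.sum_eq_single i]
  · simp only [map_smul, smul_eq_mul]
  · intro j _ hj
    simp only [map_smul, hne j hj, smul_zero]
  · simp only [zero_smul, map_zero, implies_true]

theorem linearIndependent_of_dual [NoZeroDivisors R] (hT : LinearIndepOn R g T)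
    (hne : ∀ i ∉ T, ∀ j ≠ i, L i (g j) = 0) (hself : ∀ i ∉ T, L i (g i) ≠ 0) :
    LinearIndependent R g := by
  refine linearIndependent_iff.2 fun c hc ↦ linearIndepOn_iff.1 hT c ?_ hc
  rw [Finsupp.mem_supported']
  intro i hi
  have hLi := dual_linearCombination (hne i hi) c
  rw [hc, map_zero] at hLi
  exact (mul_eq_zero.1 hLi.symm).resolve_right (hself i hi)

end DualFamily

theorem cone_eq_setOf_dual_nonneg {V ι : Type*} [AddCommGroup V] [Module ℚ V] {S : Set V}
    {T : Set ι} {g : ι → V} {L : ι → Module.Dual ℚ V}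
    (hspan : Submodule.span ℚ (Set.range g) = ⊤)
    (hg : ∀ i, g i ∈ cone S) (hneg : ∀ i ∈ T, -g i ∈ cone S)
    (hL : ∀ i ∉ T, ∀ v ∈ S, 0 ≤ L i v)
    (hne : ∀ i ∉ T, ∀ j ≠ i, L i (g j) = 0) (hself : ∀ i ∉ T, 0 < L i (g i)) :
    cone S = {x | ∀ i ∉ T, 0 ≤ L i x} := by
  refine Set.Subset.antisymm (fun x hx i hi ↦ nonneg_of_mem_cone (hL i hi) hx) fun x hx ↦ ?_
  obtain ⟨c, rfl⟩ := Finsupp.mem_span_range_iff_exists_finsupp.1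
    (hspan ▸ Submodule.mem_top : x ∈ Submodule.span ℚ (Set.range g))
  refine sum_mem_cone fun i _ ↦ ?_
  rcases le_total 0 (c i) with hci | hci
  · exact smul_mem_cone hci (hg i)
  · by_cases hi : i ∈ T
    · simpa only [neg_smul_neg] using smul_mem_cone (neg_nonneg.2 hci) (hneg i hi)
    · have hLx : 0 ≤ L i (Finsupp.linearCombination ℚ g c) := hx i hi
      rw [dual_linearCombination (hne i hi)] at hLx
      exact smul_mem_cone (nonneg_of_mul_nonneg_left hLx (hself i hi)) (hg i)

section Orbits

variable {B : Type*} {σ : Equiv.Perm B} {a τ : B}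

theorem pow_add_apply (σ : Equiv.Perm B) (m n : ℕ) (a : B) :
    (σ ^ (m + n)) a = (σ ^ m) ((σ ^ n) a) := by
  rw [pow_add, Equiv.Perm.mul_apply]

theorem pow_succ_apply (σ : Equiv.Perm B) (n : ℕ) (a : B) :
    (σ ^ (n + 1)) a = (σ ^ n) (σ a) := by
  rw [pow_succ, Equiv.Perm.mul_apply]

theorem pow_succ_apply' (σ : Equiv.Perm B) (n : ℕ) (a : B) :
    (σ ^ (n + 1)) a = σ ((σ ^ n) a) := by
  rw [pow_succ', Equiv.Perm.mul_apply]

theorem sameOrbit_pow (σ : Equiv.Perm B) (n : ℕ) (a : B) : sameOrbit σ a ((σ ^ n) a) :=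
  ⟨n, rfl⟩

theorem sameOrbit_refl (σ : Equiv.Perm B) (a : B) : sameOrbit σ a a := sameOrbit_pow σ 0 a

theorem sameOrbit_apply (σ : Equiv.Perm B) (a : B) : sameOrbit σ a (σ a) := sameOrbit_pow σ 1 a

theorem sameOrbit.trans {b : B} (hab : sameOrbit σ a b) (hbτ : sameOrbit σ b τ) :
    sameOrbit σ a τ := by
  obtain ⟨m, rfl⟩ := hab
  obtain ⟨n, rfl⟩ := hbτ
  exact ⟨n + m, pow_add_apply σ n m a⟩

theorem not_orbit_subset {S : Set B} (ha : a ∉ S) : ¬ orbit σ a ⊆ S :=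
  fun h ↦ ha (h (sameOrbit_refl σ a))

theorem pow_steps0_apply (h : sameOrbit σ a τ) : (σ ^ steps0 σ a τ) a = τ :=
  Nat.sInf_mem (s := {n : ℕ | (σ ^ n) a = τ}) h

theorem steps0_le {n : ℕ} (h : (σ ^ n) a = τ) : steps0 σ a τ ≤ n := Nat.sInf_le h

theorem pow_injOn_Iio_minimalPeriod (σ : Equiv.Perm B) (a : B) :
    Set.InjOn (fun n : ℕ ↦ (σ ^ n) a) (Set.Iio (minimalPeriod σ a)) := by
  simpa only [Equiv.Perm.iterate_eq_pow] using iterate_injOn_Iio_minimalPeriod (f := σ) (x := a)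

theorem pow_minimalPeriod_apply (σ : Equiv.Perm B) (a : B) : (σ ^ minimalPeriod σ a) a = a := by
  rw [← Equiv.Perm.iterate_eq_pow, iterate_minimalPeriod]

theorem steps0_pow_apply {n : ℕ} (hn : n < minimalPeriod σ a) :
    steps0 σ a ((σ ^ n) a) = n :=
  pow_injOn_Iio_minimalPeriod σ a ((steps0_le rfl).trans_lt hn) hn (pow_steps0_apply ⟨n, rfl⟩)

theorem steps_eq_of_forall_lt_ne {n : ℕ} (hn : 0 < n)
    (h : ∀ j, 0 < j → j < n → (σ ^ j) a ≠ (σ ^ n) a) : steps σ a ((σ ^ n) a) = n :=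
  IsLeast.csInf_eq ⟨⟨hn, rfl⟩, fun j hj ↦ not_lt.1 fun hjn ↦ h j hj.1 hjn hj.2⟩

variable [Finite B]

theorem sameOrbit_iff_sameCycle : sameOrbit σ a τ ↔ σ.SameCycle a τ :=
  ⟨fun ⟨n, hn⟩ ↦ ⟨n, by simpa using hn⟩, fun h ↦ h.exists_nat_pow_eq⟩

theorem sameOrbit.symm (h : sameOrbit σ a τ) : sameOrbit σ τ a :=
  sameOrbit_iff_sameCycle.2 (sameOrbit_iff_sameCycle.1 h).symm

theorem minimalPeriod_pos (σ : Equiv.Perm B) (a : B) : 0 < minimalPeriod σ a :=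
  minimalPeriod_pos_of_mem_periodicPts (σ.injective.mem_periodicPts a)

theorem minimalPeriod_pow_apply (σ : Equiv.Perm B) (n : ℕ) (a : B) :
    minimalPeriod σ ((σ ^ n) a) = minimalPeriod σ a := by
  rw [← Equiv.Perm.iterate_eq_pow, minimalPeriod_apply_iterate (σ.injective.mem_periodicPts a)]

theorem steps0_lt_minimalPeriod (h : sameOrbit σ a τ) : steps0 σ a τ < minimalPeriod σ a := by
  obtain ⟨n, rfl⟩ := h
  refine (steps0_le (n := n % minimalPeriod σ a) ?_).trans_lt (Nat.mod_lt _ (minimalPeriod_pos σ a))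
  simp only [← Equiv.Perm.iterate_eq_pow, iterate_mod_minimalPeriod_eq]

theorem steps0_inv_apply_add_one (σ : Equiv.Perm B) (a : B) :
    steps0 σ a (σ⁻¹ a) + 1 = minimalPeriod σ a := by
  have hpos := minimalPeriod_pos σ a
  have hinv : σ⁻¹ a = (σ ^ (minimalPeriod σ a - 1)) a := by
    rw [Equiv.Perm.inv_eq_iff_eq, ← pow_succ_apply', Nat.sub_one_add_one hpos.ne',
      pow_minimalPeriod_apply]
  rw [hinv, steps0_pow_apply (Nat.sub_lt hpos one_pos), Nat.sub_one_add_one hpos.ne']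

theorem pow_steps_apply (h : sameOrbit σ a τ) : (σ ^ steps σ a τ) a = τ := by
  obtain ⟨n, hn, -, hna⟩ := (sameOrbit_iff_sameCycle.1 h).exists_pow_eq''
  exact (Nat.sInf_mem (s := {n : ℕ | 0 < n ∧ (σ ^ n) a = τ}) ⟨n, hn, hna⟩).2

theorem exists_pos_pow_apply_notMem {S : Set B} (h : ¬ orbit σ a ⊆ S) :
    ∃ n, 0 < n ∧ (σ ^ n) a ∉ S := by
  obtain ⟨τ, haτ, hτ⟩ := Set.not_subset.1 h
  obtain ⟨n, hn, -, rfl⟩ := (sameOrbit_iff_sameCycle.1 haτ).exists_pow_eq''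
  exact ⟨n, hn, hτ⟩

end Orbits

section ExitTimes

variable {B : Type*} {σ : Equiv.Perm B} {T : Set B} {β : B}

theorem mu_eq_of_isLeast {n : ℕ} (h : IsLeast {i | 0 < i ∧ (σ ^ i) β ∉ T} n) : mu σ T β = n := by
  rw [mu, if_neg fun hT ↦ h.1.2 (hT (sameOrbit_pow σ n β)), h.csInf_eq]

theorem notMem_of_notMem_tilde (h : β ∉ tilde σ T) : β ∉ T := fun hT ↦ h (Or.inl hT)

variable [Finite B]

theorem isLeast_mu (h : ¬ orbit σ β ⊆ T) : IsLeast {i | 0 < i ∧ (σ ^ i) β ∉ T} (mu σ T β) := by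
  rw [mu, if_neg h]
  exact ⟨Nat.sInf_mem (exists_pos_pow_apply_notMem h), fun i hi ↦ Nat.sInf_le hi⟩

theorem isLeast_nn (h : ¬ orbit σ β ⊆ tilde σ T) :
    IsLeast {i | 0 < i ∧ (σ ^ i) β ∉ tilde σ T} (nn σ T β) :=
  ⟨Nat.sInf_mem (exists_pos_pow_apply_notMem h), fun _ hi ↦ Nat.sInf_le hi⟩

theorem mu_pos (hβ : β ∉ T) : 0 < mu σ T β := (isLeast_mu (not_orbit_subset hβ)).1.1

theorem pow_mu_notMem (hβ : β ∉ T) : (σ ^ mu σ T β) β ∉ T :=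
  (isLeast_mu (not_orbit_subset hβ)).1.2

theorem pow_mem_of_lt_mu (hβ : β ∉ T) {i : ℕ} (hi : 0 < i) (hlt : i < mu σ T β) :
    (σ ^ i) β ∈ T := by
  by_contra hiT
  exact hlt.not_ge ((isLeast_mu (not_orbit_subset hβ)).2 ⟨hi, hiT⟩)

theorem mu_le_minimalPeriod (hβ : β ∉ T) : mu σ T β ≤ minimalPeriod σ β :=
  (isLeast_mu (not_orbit_subset hβ)).2
    ⟨minimalPeriod_pos σ β, by rwa [pow_minimalPeriod_apply]⟩

theorem mu_of_apply_mem (h : ¬ orbit σ β ⊆ T) (hσβ : σ β ∈ T) :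
    mu σ T β = mu σ T (σ β) + 1 := by
  have hσ : ¬ orbit σ (σ β) ⊆ T :=
    fun hsub ↦ h fun τ hτ ↦ hsub ((sameOrbit_apply σ β).symm.trans hτ)
  refine mu_eq_of_isLeast ⟨⟨Nat.succ_pos _, ?_⟩, ?_⟩
  · rw [pow_succ_apply]
    exact (isLeast_mu hσ).1.2
  · rintro (_ | _ | i) ⟨hi, hiT⟩
    · exact absurd hi (lt_irrefl 0)
    · exact absurd hσβ hiT
    · rw [pow_succ_apply] at hiT
      exact Nat.succ_le_succ ((isLeast_mu hσ).2 ⟨i.succ_pos, hiT⟩)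

theorem mu_le_nn (hβ : β ∉ tilde σ T) : mu σ T β ≤ nn σ T β :=
  (isLeast_mu (not_orbit_subset (notMem_of_notMem_tilde hβ))).2
    ((isLeast_nn (not_orbit_subset hβ)).1.imp_right notMem_of_notMem_tilde)

theorem steps_pow_nn (h : ¬ orbit σ β ⊆ tilde σ T) :
    steps σ β ((σ ^ nn σ T β) β) = nn σ T β := by
  have hnn := isLeast_nn h
  refine steps_eq_of_forall_lt_ne hnn.1.1 fun j hj hlt heq ↦ ?_
  exact hlt.not_ge (hnn.2 ⟨hj, heq ▸ hnn.1.2⟩)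

theorem steps_apply_pow_nn (h : ¬ orbit σ β ⊆ tilde σ T) (hσβ : σ β ∈ tilde σ T) :
    steps σ (σ β) ((σ ^ nn σ T β) β) + 1 = nn σ T β := by
  have hnn := isLeast_nn h
  obtain ⟨_ | n, hn⟩ : ∃ n, nn σ T β = n + 1 := Nat.exists_eq_add_one.2 hnn.1.1
  · exact absurd hσβ (by simpa [hn] using hnn.1.2)
  · have hexit := hnn.1.2
    rw [hn, pow_succ_apply] at hexit
    rw [hn, pow_succ_apply, steps_eq_of_forall_lt_ne n.succ_pos fun j _ hlt heq ↦ ?_]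
    have hle : nn σ T β ≤ j + 1 := hnn.2 ⟨j.succ_pos, by rwa [pow_succ_apply, heq]⟩
    omega

end ExitTimes

section Chains

variable {B : Type*} {σ : Equiv.Perm B} {T : Set B} {β : B}

theorem inv_pow_apply_pow (σ : Equiv.Perm B) {i n : ℕ} (h : i ≤ n) (a : B) :
    (σ⁻¹ ^ i) ((σ ^ n) a) = (σ ^ (n - i)) a := by
  rw [inv_pow, Equiv.Perm.inv_eq_iff_eq, ← pow_add_apply, Nat.add_sub_of_le h]

theorem setOf_inv_pow_eq_image_Ioo (σ : Equiv.Perm B) (m : ℕ) (a : B) :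
    {τ | ∃ i ≤ m, τ = (σ⁻¹ ^ i) ((σ ^ (m + 1)) a)} =
      (fun i : ℕ ↦ (σ ^ i) a) '' Set.Ioo 0 (m + 2) := by
  ext τ
  constructor
  · rintro ⟨i, hi, rfl⟩
    exact ⟨m + 1 - i, ⟨by omega, by omega⟩, (inv_pow_apply_pow σ (by omega) a).symm⟩
  · rintro ⟨i, ⟨hi, hlt⟩, rfl⟩
    refine ⟨m + 1 - i, by omega, ?_⟩
    rw [inv_pow_apply_pow σ (by omega), Nat.sub_sub_self (by omega)]

variable [Finite B]

-- A chain is indexed by the element just before it: it is the stretch of `T` between two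
-- consecutive elements of the complement.
theorem isChainIn_iff {C : Set B} : IsChainIn σ T C ↔
    ∃ β ∉ T, 1 < mu σ T β ∧ C = (fun i : ℕ ↦ (σ ^ i) β) '' Set.Ioo 0 (mu σ T β) := by
  constructor
  · rintro ⟨γ, m, hend, hstart, hmem, rfl⟩
    obtain ⟨β, rfl⟩ := (σ ^ (m + 1)).surjective γ
    have hμ : mu σ T β = m + 2 := by
      refine mu_eq_of_isLeast ⟨⟨by omega, by rwa [pow_succ_apply']⟩, fun i ⟨hi, hiT⟩ ↦ ?_⟩
      by_contra! hlt
      have hmem' := hmem (m + 1 - i) (by omega)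
      rw [inv_pow_apply_pow σ (by omega), Nat.sub_sub_self (by omega)] at hmem'
      exact hiT hmem'
    rw [inv_pow_apply_pow σ le_rfl, Nat.sub_self] at hstart
    exact ⟨β, hstart, by omega, by rw [hμ, setOf_inv_pow_eq_image_Ioo]⟩
  · rintro ⟨β, hβ, hlt, rfl⟩
    obtain ⟨m, hm⟩ := Nat.exists_eq_add_of_lt hlt
    rw [show mu σ T β = m + 2 by omega, ← setOf_inv_pow_eq_image_Ioo]
    refine ⟨(σ ^ (m + 1)) β, m, ?_, ?_, fun i hi ↦ ?_, rfl⟩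
    · rw [← pow_succ_apply', show m + 1 + 1 = mu σ T β by omega]
      exact pow_mu_notMem hβ
    · rwa [inv_pow_apply_pow σ le_rfl, Nat.sub_self]
    · rw [inv_pow_apply_pow σ (by omega)]
      exact pow_mem_of_lt_mu hβ (by omega) (by omega)

theorem ncard_pow_image_Ioo_mu (hβ : β ∉ T) :
    ((fun i : ℕ ↦ (σ ^ i) β) '' Set.Ioo 0 (mu σ T β)).ncard = mu σ T β - 1 := by
  have hinj : Set.InjOn (fun i : ℕ ↦ (σ ^ i) β) (Set.Ioo 0 (mu σ T β)) :=
    (pow_injOn_Iio_minimalPeriod σ β).mono fun i hi ↦ hi.2.trans_le (mu_le_minimalPeriod hβ)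
  rw [hinj.ncard_image, ← Finset.coe_Ioo, Set.ncard_coe_finset, Nat.card_Ioo, Nat.sub_zero]

theorem mem_tilde_iff_even_mu (hβ : β ∉ T) : β ∈ tilde σ T ↔ Even (mu σ T β) := by
  have hpos := mu_pos (σ := σ) hβ
  simp only [tilde, Set.mem_union, hβ, false_or, Set.mem_iUnion, exists_prop, isChainIn_iff]
  constructor
  · rintro ⟨_, ⟨γ, hγ, hlt, rfl⟩, hmem⟩
    have hnot : β ∉ (fun i : ℕ ↦ (σ ^ i) γ) '' Set.Ioo 0 (mu σ T γ) := by
      rintro ⟨i, ⟨hi, hiμ⟩, rfl⟩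
      exact hβ (pow_mem_of_lt_mu hγ hi hiμ)
    rw [chainExt, ncard_pow_image_Ioo_mu hγ] at hmem
    split_ifs at hmem with hodd
    · obtain ⟨_, ⟨_ | _ | i, ⟨hi, hiμ⟩, rfl⟩, rfl⟩ := hmem.resolve_left hnot
      · exact absurd hi (lt_irrefl 0)
      · have heven := hodd.add_one
        simpa [Nat.sub_add_cancel hlt.le] using heven
      · refine absurd (pow_mem_of_lt_mu (σ := σ) hγ i.succ_pos (by omega)) ?_
        simpa [pow_succ_apply'] using hβ
    · exact absurd hmem hnot
  · intro heven
    have hlt : 1 < mu σ T β := by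
      obtain ⟨r, hr⟩ := heven
      omega
    refine ⟨_, ⟨β, hβ, hlt, rfl⟩, ?_⟩
    rw [chainExt, ncard_pow_image_Ioo_mu hβ, if_pos (Nat.Even.sub_odd hpos heven odd_one)]
    exact Or.inr ⟨σ β, ⟨1, ⟨one_pos, hlt⟩, rfl⟩, σ.symm_apply_apply β⟩

theorem apply_mem_of_mem_tilde (hβ : β ∉ T) (h : β ∈ tilde σ T) : σ β ∈ T := by
  obtain ⟨r, hr⟩ := (mem_tilde_iff_even_mu hβ).1 h
  have hpos := mu_pos (σ := σ) hβ
  exact pow_mem_of_lt_mu hβ one_pos (by omega)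

end Chains

section Signs

variable {B : Type*} {σ : Equiv.Perm B} {T : Set B} {β : B}

theorem epsT_le_one (σ : Equiv.Perm B) (T : Set B) (β : B) : epsT σ T β ≤ 1 := by
  rw [epsT]
  split_ifs
  · exact zero_le_one
  · rcases neg_one_pow_eq_or ℚ (mu σ T β - 1) with h | h <;> norm_num [h]
  · exact le_rfl

theorem epsT_of_notMem_tilde (h : β ∉ tilde σ T) : epsT σ T β = 1 := by
  rw [epsT, if_neg (not_orbit_subset (notMem_of_notMem_tilde h)), if_neg h]

variable [Finite B]

theorem epsT_eq_neg_one_pow (h : ¬ orbit σ β ⊆ T) : epsT σ T β = (-1) ^ (mu σ T β - 1) := by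
  rw [epsT, if_neg h]
  split_ifs with hβ
  · rfl
  · rw [mem_tilde_iff_even_mu (notMem_of_notMem_tilde hβ), Nat.not_even_iff_odd] at hβ
    exact (Nat.Odd.sub_odd hβ odd_one).neg_one_pow.symm

theorem epsT_of_mem_tilde (hβ : β ∉ T) (h : β ∈ tilde σ T) : epsT σ T β = -1 := by
  rw [epsT_eq_neg_one_pow (not_orbit_subset hβ)]
  exact (Nat.Even.sub_odd (mu_pos hβ) ((mem_tilde_iff_even_mu hβ).1 h) odd_one).neg_one_pow

theorem epsT_of_apply_mem (hσβ : σ β ∈ T) : epsT σ T β = -epsT σ T (σ β) := by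
  by_cases h : orbit σ β ⊆ T
  · have hσ : orbit σ (σ β) ⊆ T := fun τ hτ ↦ h ((sameOrbit_apply σ β).trans hτ)
    rw [epsT, epsT, if_pos h, if_pos hσ, neg_zero]
  · have hσ : ¬ orbit σ (σ β) ⊆ T :=
      fun hsub ↦ h fun τ hτ ↦ hsub ((sameOrbit_apply σ β).symm.trans hτ)
    rw [epsT_eq_neg_one_pow h, epsT_eq_neg_one_pow hσ, mu_of_apply_mem h hσβ, Nat.add_sub_cancel,
      ← Nat.sub_one_add_one (isLeast_mu hσ).1.1.ne', pow_succ, Nat.add_sub_cancel, mul_neg_one]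

theorem epsT_mul_self (hβ : β ∉ T) : epsT σ T β * epsT σ T β = 1 := by
  rw [epsT_eq_neg_one_pow (not_orbit_subset hβ), ← mul_pow, neg_mul_neg, one_mul, one_pow]

theorem epsT_of_mem_Tscr (hβ : β ∈ Tscr σ T) : epsT σ T β = 1 := by
  rcases hβ with hβ | ⟨γ, ⟨hγ, hγT⟩, rfl⟩
  · exact epsT_of_notMem_tilde hβ
  · rw [← neg_eq_iff_eq_neg.2 (epsT_of_apply_mem (apply_mem_of_mem_tilde hγT hγ)),
      epsT_of_mem_tilde hγT hγ, neg_neg]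

end Signs

section OrbitForms

variable {B : Type*} {σ : Equiv.Perm B} {p : ℕ} {ε : B → ℚ} {a τ : B} {N : ℕ}

/-- The linear form `κ ↦ ∑_{i < N} ε(σ^i a) p^i k_{σ^i a}`: the paper's `L^ε[a, σ^{N-1} a]`, with
the number `N` of terms in place of the second endpoint. -/
noncomputable def orbitForm (σ : Equiv.Perm B) (p : ℕ) (ε : B → ℚ) (a : B) (N : ℕ) :
    Module.Dual ℚ (B → ℚ) :=
  ∑ i ∈ Finset.range N, (ε ((σ ^ i) a) * (p : ℚ) ^ i) • LinearMap.proj ((σ ^ i) a)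

theorem orbitForm_apply (κ : B → ℚ) : orbitForm σ p ε a N κ =
    ∑ i ∈ Finset.range N, ε ((σ ^ i) a) * (p : ℚ) ^ i * κ ((σ ^ i) a) := by
  simp only [orbitForm, LinearMap.sum_apply, LinearMap.smul_apply, LinearMap.proj_apply,
    smul_eq_mul]

theorem Lfun_eq_orbitForm (b : B) (κ : B → ℚ) :
    Lfun σ p ε a b κ = orbitForm σ p ε a (steps0 σ a b + 1) κ :=
  (orbitForm_apply κ).symm

variable [DecidableEq B]

theorem orbitForm_e_pow (hN : N ≤ minimalPeriod σ a) {i : ℕ} (hi : i < N) :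
    orbitForm σ p ε a N (e ((σ ^ i) a)) = ε ((σ ^ i) a) * (p : ℚ) ^ i := by
  rw [orbitForm_apply, Finset.sum_eq_single_of_mem i (Finset.mem_range.2 hi), e, if_pos rfl,
    mul_one]
  intro j hj hji
  have hne : (σ ^ j) a ≠ (σ ^ i) a := fun h ↦ hji <|
    pow_injOn_Iio_minimalPeriod σ a ((Finset.mem_range.1 hj).trans_le hN) (hi.trans_le hN) h
  rw [e, if_neg hne, mul_zero]

theorem orbitForm_e_eq_zero (h : ∀ i < N, (σ ^ i) a ≠ τ) : orbitForm σ p ε a N (e τ) = 0 := by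
  rw [orbitForm_apply]
  refine Finset.sum_eq_zero fun i hi ↦ ?_
  rw [e, if_neg (h i (Finset.mem_range.1 hi)), mul_zero]

theorem orbitForm_e_nonneg (h : 0 ≤ ε τ) : 0 ≤ orbitForm σ p ε a N (e τ) := by
  rw [orbitForm_apply]
  refine Finset.sum_nonneg fun i _ ↦ ?_
  rw [e]
  split_ifs with hi
  · rw [hi]
    positivity
  · rw [mul_zero]

-- The sign change makes the sum telescope, leaving only the coefficients of `e τ` at both ends.
theorem orbitForm_bsimple (hε : ε (σ⁻¹ τ) = -ε τ) (ha : a ≠ τ) (hN : (σ ^ N) a ≠ τ) :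
    orbitForm σ p ε a N (bsimple σ p τ) = 0 := by
  let u : ℕ → ℚ := fun i ↦ ε ((σ ^ i) a) * (p : ℚ) ^ i * e τ ((σ ^ i) a)
  have hterm (i : ℕ) : ε ((σ ^ i) a) * (p : ℚ) ^ i * bsimple σ p τ ((σ ^ i) a) =
      u i - u (i + 1) := by
    simp only [u, bsimple, Pi.add_apply, Pi.smul_apply, smul_eq_mul, e, Equiv.Perm.eq_inv_iff_eq,
      pow_succ_apply']
    by_cases h : σ ((σ ^ i) a) = τ
    · rw [← Equiv.Perm.eq_inv_iff_eq.2 h] at hε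
      rw [if_pos h, h, hε]
      ring
    · rw [if_neg h]
      ring
  have hu0 : u 0 = 0 := by simp only [u, e, pow_zero, Equiv.Perm.one_apply, if_neg ha, mul_zero]
  have huN : u N = 0 := by simp only [u, e, if_neg hN, mul_zero]
  rw [orbitForm_apply, Finset.sum_congr rfl fun i _ ↦ hterm i, Finset.sum_range_sub', hu0, huN,
    sub_zero]

end OrbitForms

section FaceForms

variable {B : Type*} {σ : Equiv.Perm B} {p : ℕ} {T : Set B} {β β' δ τ : B}

/-- The functional `L_{T,δ}` as a linear form. -/
noncomputable def faceForm (σ : Equiv.Perm B) (p : ℕ) (T : Set B) (δ : B) :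
    Module.Dual ℚ (B → ℚ) :=
  if δ ∈ tilde σ T then orbitForm σ p (epsT σ T) δ (mu σ T δ)
  else orbitForm σ p (epsT σ T) ((σ ^ mu σ T δ) δ) (minimalPeriod σ ((σ ^ mu σ T δ) δ))

theorem faceForm_e_nonneg [DecidableEq B] (hτ : 0 ≤ epsT σ T τ) :
    0 ≤ faceForm σ p T δ (e τ) := by
  rw [faceForm]
  split_ifs <;> exact orbitForm_e_nonneg hτ

theorem faceForm_e_of_not_sameOrbit [DecidableEq B] (h : ¬ sameOrbit σ δ τ) :
    faceForm σ p T δ (e τ) = 0 := by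
  rw [faceForm]
  split_ifs
  · exact orbitForm_e_eq_zero fun i _ hi ↦ h ⟨i, hi⟩
  · exact orbitForm_e_eq_zero fun i _ hi ↦ h ((sameOrbit_pow σ _ δ).trans ⟨i, hi⟩)

variable [Finite B]

theorem LT_eq_faceForm (hδ : δ ∉ T) (κ : B → ℚ) : LT σ p T δ κ = faceForm σ p T δ κ := by
  rw [LT, faceForm]
  split_ifs with h
  · have hpos := mu_pos (σ := σ) hδ
    have hlt : mu σ T δ - 1 < minimalPeriod σ δ :=
      (Nat.sub_lt hpos one_pos).trans_le (mu_le_minimalPeriod hδ)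
    rw [Lfun_eq_orbitForm, steps0_pow_apply hlt, Nat.sub_one_add_one hpos.ne']
  · rw [Lfun1, Lfun_eq_orbitForm, steps0_inv_apply_add_one]

theorem steps0_pow_mu_self (hδ : δ ∉ T) :
    steps0 σ ((σ ^ mu σ T δ) δ) δ = minimalPeriod σ δ - mu σ T δ := by
  have hpos := mu_pos (σ := σ) hδ
  have hle := mu_le_minimalPeriod (σ := σ) hδ
  have hback : (σ ^ (minimalPeriod σ δ - mu σ T δ)) ((σ ^ mu σ T δ) δ) = δ := by
    rw [← pow_add_apply, Nat.sub_add_cancel hle, pow_minimalPeriod_apply]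
  have hlt : minimalPeriod σ δ - mu σ T δ < minimalPeriod σ ((σ ^ mu σ T δ) δ) := by
    rw [minimalPeriod_pow_apply]
    omega
  simpa only [hback] using steps0_pow_apply hlt

-- Starting just after the stretch of `T` that follows `δ`, a full turn meets `δ` last.
theorem steps0_pow_mu_lt (hδ : δ ∉ T) (hβ : β ∉ T) (hne : β ≠ δ) (h : sameOrbit σ δ β) :
    steps0 σ ((σ ^ mu σ T δ) δ) β < steps0 σ ((σ ^ mu σ T δ) δ) δ := by
  have hA : sameOrbit σ ((σ ^ mu σ T δ) δ) β := (sameOrbit_pow σ _ δ).symm.trans h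
  have hlt := steps0_lt_minimalPeriod hA
  rw [minimalPeriod_pow_apply] at hlt
  have hδδ := pow_steps0_apply (sameOrbit_pow σ (mu σ T δ) δ).symm
  have hself := steps0_pow_mu_self (σ := σ) hδ
  have hle := mu_le_minimalPeriod (σ := σ) hδ
  by_contra! hge
  obtain ⟨i, hi⟩ := Nat.exists_eq_add_of_le' hge
  have hβi : (σ ^ i) δ = β := by
    rw [← pow_steps0_apply hA, hi, pow_add_apply, hδδ]
  rcases i.eq_zero_or_pos with rfl | hpos
  · exact hne hβi.symm
  · exact hβ (hβi ▸ pow_mem_of_lt_mu hδ hpos (by omega))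

theorem steps0_pow_mu_pow_nn (hδ : δ ∉ tilde σ T) (hβ : β ∉ T) (hne : β ≠ δ)
    (h : sameOrbit σ δ β) : steps0 σ ((σ ^ mu σ T δ) δ) ((σ ^ nn σ T β) β) =
      nn σ T β + steps0 σ ((σ ^ mu σ T δ) δ) β := by
  have hδT := notMem_of_notMem_tilde hδ
  have hA : sameOrbit σ ((σ ^ mu σ T δ) δ) δ := (sameOrbit_pow σ _ δ).symm
  have hAβ := pow_steps0_apply (hA.trans h)
  have hlt := steps0_pow_mu_lt hδT hβ hne h
  obtain ⟨k, hk⟩ := Nat.exists_eq_add_of_lt hlt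
  have hkδ : (σ ^ (k + 1)) β = δ := by
    rw [← hAβ, ← pow_add_apply, add_comm, ← add_assoc, ← hk, pow_steps0_apply hA]
  have hnn : nn σ T β ≤ k + 1 :=
    (isLeast_nn fun hsub ↦ hδ (hsub h.symm)).2 ⟨k.succ_pos, by rwa [hkδ]⟩
  have hper := steps0_lt_minimalPeriod hA
  have hpow : (σ ^ nn σ T β) β =
      (σ ^ (nn σ T β + steps0 σ ((σ ^ mu σ T δ) δ) β)) ((σ ^ mu σ T δ) δ) := by
    rw [pow_add_apply, hAβ]
  rw [hpow, steps0_pow_apply (by omega)]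

variable [DecidableEq B]

theorem faceForm_bsimple (hδ : δ ∉ T) (hτ : τ ∈ T) : faceForm σ p T δ (bsimple σ p τ) = 0 := by
  have hε : epsT σ T (σ⁻¹ τ) = -epsT σ T τ := by
    have hστ : σ (σ⁻¹ τ) = τ := σ.apply_symm_apply τ
    rw [epsT_of_apply_mem (by rwa [hστ]), hστ]
  have hne {x : B} (hx : x ∉ T) : x ≠ τ := fun h ↦ hx (h ▸ hτ)
  have hμ := hne (pow_mu_notMem (σ := σ) hδ)
  rw [faceForm]
  split_ifs
  · exact orbitForm_bsimple hε (hne hδ) hμ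
  · exact orbitForm_bsimple hε hμ (by rwa [pow_minimalPeriod_apply])

theorem faceForm_e_of_mem_tilde (hδ : δ ∉ T) (h : δ ∈ tilde σ T) (hβ : β ∉ T) :
    faceForm σ p T δ (e β) = if β = δ then -1 else 0 := by
  rw [faceForm, if_pos h]
  split_ifs with heq
  · subst heq
    have hε := epsT_of_mem_tilde hβ h
    simpa [hε] using orbitForm_e_pow (p := p) (ε := epsT σ T) (mu_le_minimalPeriod (σ := σ) hβ)
      (mu_pos hβ)
  · refine orbitForm_e_eq_zero fun i hi hiβ ↦ ?_
    rcases i.eq_zero_or_pos with rfl | hpos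
    · exact heq hiβ.symm
    · exact hβ (hiβ ▸ pow_mem_of_lt_mu hδ hpos hi)

theorem faceForm_e_of_notMem_tilde (hδ : δ ∉ tilde σ T) (h : sameOrbit σ δ τ) :
    faceForm σ p T δ (e τ) = epsT σ T τ * (p : ℚ) ^ steps0 σ ((σ ^ mu σ T δ) δ) τ := by
  have hA : sameOrbit σ ((σ ^ mu σ T δ) δ) τ := (sameOrbit_pow σ _ δ).symm.trans h
  rw [faceForm, if_neg hδ]
  simpa only [pow_steps0_apply hA] using
    orbitForm_e_pow (p := p) (ε := epsT σ T) le_rfl (steps0_lt_minimalPeriod hA)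

theorem faceForm_hvec_nonneg (hp : 0 < p) (hδ : δ ∉ T) (hβ : β ∉ T) (hβ' : β' ∈ Tscr σ T)
    (h : sameOrbit σ β β') : 0 ≤ faceForm σ p T δ (hvec σ p β β') := by
  have hε' := epsT_of_mem_Tscr hβ'
  rw [hvec, map_add, map_neg, map_smul, smul_eq_mul, le_neg_add_iff_add_le, add_zero]
  by_cases hδt : δ ∈ tilde σ T
  · have hβ'nonneg : 0 ≤ faceForm σ p T δ (e β') :=
      faceForm_e_nonneg (hε' ▸ zero_le_one)
    rw [faceForm_e_of_mem_tilde hδ hδt hβ]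
    split_ifs
    · exact le_trans (by norm_num) (mul_nonneg (by positivity) hβ'nonneg)
    · positivity
  by_cases hδβ : sameOrbit σ δ β
  · have hA : sameOrbit σ ((σ ^ mu σ T δ) δ) β' := (sameOrbit_pow σ _ δ).symm.trans (hδβ.trans h)
    have hle : steps0 σ ((σ ^ mu σ T δ) δ) β ≤
        steps σ β' β + steps0 σ ((σ ^ mu σ T δ) δ) β' :=
      steps0_le (by rw [pow_add_apply, pow_steps0_apply hA, pow_steps_apply h.symm])
    rw [faceForm_e_of_notMem_tilde hδt hδβ, faceForm_e_of_notMem_tilde hδt (hδβ.trans h), hε',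
      one_mul, ← pow_add]
    calc epsT σ T β * (p : ℚ) ^ steps0 σ ((σ ^ mu σ T δ) δ) β
        ≤ (p : ℚ) ^ steps0 σ ((σ ^ mu σ T δ) δ) β :=
          mul_le_of_le_one_left (by positivity) (epsT_le_one σ T β)
      _ ≤ (p : ℚ) ^ (steps σ β' β + steps0 σ ((σ ^ mu σ T δ) δ) β') :=
          pow_le_pow_right₀ (mod_cast hp) hle
  · rw [faceForm_e_of_not_sameOrbit hδβ,
      faceForm_e_of_not_sameOrbit fun hδβ' ↦ hδβ (hδβ'.trans h.symm), mul_zero]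

theorem faceForm_nonneg_of_mem_Dgen (hp : 0 < p) (hδ : δ ∉ T) {v : B → ℚ} (hv : v ∈ Dgen σ p T) :
    0 ≤ faceForm σ p T δ v := by
  rcases hv with ⟨β, β', hβ, hβ', h, rfl⟩ | ⟨τ, hτ, rfl | rfl⟩
  · exact faceForm_hvec_nonneg hp hδ hβ hβ' h
  · exact (faceForm_bsimple hδ hτ).ge
  · rw [map_neg, faceForm_bsimple hδ hτ, neg_zero]

end FaceForms

section DualBasis

variable {B : Type*} [DecidableEq B] {σ : Equiv.Perm B} {p : ℕ} {T : Set B} {β δ : B}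

theorem gvec_of_mem (hβ : β ∈ T) : gvec σ p T β = bsimple σ p β := if_pos hβ

theorem gvec_of_orbit_subset (hβ : β ∉ T) (h : orbit σ β ⊆ tilde σ T) : gvec σ p T β = -e β := by
  rw [gvec, if_neg hβ, if_pos h]

variable [Finite B]

theorem gvec_of_not_orbit_subset (hβ : β ∉ T) (h : ¬ orbit σ β ⊆ tilde σ T) :
    gvec σ p T β = -e ((σ ^ nn σ T β) β) + (epsT σ T β * (p : ℚ) ^ nn σ T β) • e β := by
  rw [gvec, if_neg hβ, if_neg h]
  split_ifs with hβt
  · rw [epsT_of_mem_tilde hβ hβt, fB, neg_add, neg_one_mul, neg_smul]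
  · rw [epsT_of_notMem_tilde hβt, fH, one_mul]

theorem faceForm_gvec_eq_zero (hδ : δ ∉ T) (hne : β ≠ δ) : faceForm σ p T δ (gvec σ p T β) = 0 := by
  by_cases hβ : β ∈ T
  · rw [gvec_of_mem hβ, faceForm_bsimple hδ hβ]
  by_cases hδβ : sameOrbit σ δ β
  swap
  · have hnn : ¬ sameOrbit σ δ ((σ ^ nn σ T β) β) :=
      fun h ↦ hδβ (h.trans (sameOrbit_pow σ _ β).symm)
    by_cases hsub : orbit σ β ⊆ tilde σ T
    · rw [gvec_of_orbit_subset hβ hsub, map_neg, faceForm_e_of_not_sameOrbit hδβ, neg_zero]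
    · rw [gvec_of_not_orbit_subset hβ hsub, map_add, map_neg, map_smul,
        faceForm_e_of_not_sameOrbit hδβ, faceForm_e_of_not_sameOrbit hnn, neg_zero, smul_zero,
        add_zero]
  by_cases hsub : orbit σ β ⊆ tilde σ T
  · rw [gvec_of_orbit_subset hβ hsub, map_neg,
      faceForm_e_of_mem_tilde hδ (hsub hδβ.symm) hβ, if_neg hne, neg_zero]
  have hexit : (σ ^ nn σ T β) β ∉ tilde σ T := (isLeast_nn hsub).1.2
  rw [gvec_of_not_orbit_subset hβ hsub, map_add, map_neg, map_smul, smul_eq_mul]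
  by_cases hδt : δ ∈ tilde σ T
  · have hexit_ne : (σ ^ nn σ T β) β ≠ δ := fun h ↦ hexit (h ▸ hδt)
    rw [faceForm_e_of_mem_tilde hδ hδt hβ, if_neg hne,
      faceForm_e_of_mem_tilde hδ hδt (notMem_of_notMem_tilde hexit), if_neg hexit_ne, neg_zero,
      mul_zero, add_zero]
  · rw [faceForm_e_of_notMem_tilde hδt hδβ,
      faceForm_e_of_notMem_tilde hδt (hδβ.trans (sameOrbit_pow σ _ β)),
      epsT_of_notMem_tilde hexit, steps0_pow_mu_pow_nn hδt hβ hne hδβ, one_mul,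
      mul_mul_mul_comm, epsT_mul_self hβ, one_mul, pow_add, neg_add_cancel]

theorem faceForm_gvec_self_pos (hp : 1 < p) (hδ : δ ∉ T) :
    0 < faceForm σ p T δ (gvec σ p T δ) := by
  by_cases hsub : orbit σ δ ⊆ tilde σ T
  · rw [gvec_of_orbit_subset hδ hsub, map_neg,
      faceForm_e_of_mem_tilde hδ (hsub (sameOrbit_refl σ δ)) hδ, if_pos rfl, neg_neg]
    exact one_pos
  have hexit : (σ ^ nn σ T δ) δ ∉ tilde σ T := (isLeast_nn hsub).1.2
  rw [gvec_of_not_orbit_subset hδ hsub, map_add, map_neg, map_smul, smul_eq_mul]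
  by_cases hδt : δ ∈ tilde σ T
  · have hexit_ne : (σ ^ nn σ T δ) δ ≠ δ := fun h ↦ hexit (by rwa [h])
    rw [faceForm_e_of_mem_tilde hδ hδt (notMem_of_notMem_tilde hexit), if_neg hexit_ne,
      faceForm_e_of_mem_tilde hδ hδt hδ, if_pos rfl, epsT_of_mem_tilde hδ hδt, neg_zero, zero_add,
      neg_one_mul, neg_mul_neg, mul_one]
    positivity
  · have hle : steps0 σ ((σ ^ mu σ T δ) δ) ((σ ^ nn σ T δ) δ) ≤ nn σ T δ - mu σ T δ :=
      steps0_le (by rw [← pow_add_apply, Nat.sub_add_cancel (mu_le_nn hδt)])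
    have hμ := mu_pos (σ := σ) hδ
    have hnn := (isLeast_nn hsub).1.1
    rw [faceForm_e_of_notMem_tilde hδt (sameOrbit_pow σ _ δ), epsT_of_notMem_tilde hexit,
      faceForm_e_of_notMem_tilde hδt (sameOrbit_refl σ δ), epsT_of_notMem_tilde hδt, one_mul,
      one_mul, one_mul, ← pow_add, lt_neg_add_iff_add_lt, add_zero]
    exact pow_lt_pow_right₀ (mod_cast hp) (by omega)

theorem linearIndependent_bsimple (σ : Equiv.Perm B) (hp : 1 < p) :
    LinearIndependent ℚ (bsimple σ p) := by
  cases nonempty_fintype B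
  refine Fintype.linearIndependent_iff.2 fun c hc τ ↦ ?_
  have hstep (x : B) : c x = -(p : ℚ) * c (σ x) := by
    have hx := congrFun hc x
    simp only [Finset.sum_apply, Pi.smul_apply, bsimple, Pi.add_apply, e, smul_eq_mul, mul_add,
      mul_ite, mul_one, mul_zero, Equiv.Perm.eq_inv_iff_eq, Finset.sum_add_distrib,
      Finset.sum_ite_eq, Finset.mem_univ, if_true, Pi.zero_apply] at hx
    linarith
  have hiter (n : ℕ) : c τ = (-(p : ℚ)) ^ n * c ((σ ^ n) τ) := by
    induction n with
    | zero => simp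
    | succ n ih => rw [ih, hstep, pow_succ, mul_assoc, pow_succ_apply']
  have hper := hiter (minimalPeriod σ τ)
  rw [pow_minimalPeriod_apply] at hper
  have hne : (-(p : ℚ)) ^ minimalPeriod σ τ ≠ 1 := by
    intro h
    have habs : (p : ℚ) ^ minimalPeriod σ τ = 1 := by simpa [abs_pow] using congrArg abs h
    exact (one_lt_pow₀ (mod_cast hp) (minimalPeriod_pos σ τ).ne').ne' habs
  by_contra hτ
  exact hne (mul_right_cancel₀ hτ (by rw [one_mul, ← hper]))

theorem linearIndependent_gvec (σ : Equiv.Perm B) (hp : 1 < p) (T : Set B) :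
    LinearIndependent ℚ (gvec σ p T) := by
  have hT : LinearIndepOn ℚ (gvec σ p T) T :=
    ((linearIndependent_bsimple σ hp).linearIndepOn T).congr fun β hβ ↦ (gvec_of_mem hβ).symm
  exact linearIndependent_of_dual hT (fun δ hδ β hne ↦ faceForm_gvec_eq_zero hδ hne)
    fun δ hδ ↦ (faceForm_gvec_self_pos hp hδ).ne'

theorem span_range_gvec (σ : Equiv.Perm B) (hp : 1 < p) (T : Set B) :
    Submodule.span ℚ (Set.range (gvec σ p T)) = ⊤ := by
  cases nonempty_fintype B
  exact (linearIndependent_gvec σ hp T).span_eq_top_of_card_eq_finrank'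
    (Module.finrank_fintype_fun_eq_card ℚ).symm

end DualBasis

section Membership

variable {B : Type*} [DecidableEq B] {σ : Equiv.Perm B} {p : ℕ} {T : Set B} {β γ : B}

theorem hvec_apply_add_smul_neg_bsimple (σ : Equiv.Perm B) (p : ℕ) (β γ : B) :
    hvec σ p γ (σ β) + (p : ℚ) ^ steps σ (σ β) γ • -bsimple σ p (σ β) =
      -e γ - (p : ℚ) ^ (steps σ (σ β) γ + 1) • e β := by
  have hinv : σ⁻¹ (σ β) = β := σ.symm_apply_apply β
  rw [hvec, bsimple, hinv, pow_succ, mul_smul]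
  module

theorem neg_gvec_mem_D (hβ : β ∈ T) : -gvec σ p T β ∈ D σ p T :=
  subset_cone _ (Or.inr ⟨β, hβ, Or.inr (congrArg Neg.neg (gvec_of_mem hβ))⟩)

variable [Finite B]

theorem neg_e_sub_smul_e_mem_D (hβ : β ∉ T) (hβt : β ∈ tilde σ T) (hγ : γ ∉ T)
    (h : sameOrbit σ β γ) : -e γ - (p : ℚ) ^ (steps σ (σ β) γ + 1) • e β ∈ D σ p T := by
  rw [← hvec_apply_add_smul_neg_bsimple]
  have hσβ := apply_mem_of_mem_tilde hβ hβt
  exact add_mem_cone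
    (subset_cone _ (Or.inl ⟨γ, σ β, hγ, Or.inr ⟨β, ⟨hβt, hβ⟩, rfl⟩,
      h.symm.trans (sameOrbit_apply σ β), rfl⟩))
    (smul_mem_cone (by positivity) (subset_cone _ (Or.inr ⟨σ β, hσβ, Or.inr rfl⟩)))

theorem neg_e_mem_D (hβ : β ∉ T) (hβt : β ∈ tilde σ T) : -e β ∈ D σ p T := by
  have hmem := neg_e_sub_smul_e_mem_D (p := p) hβ hβt hβ (sameOrbit_refl σ β)
  set q : ℚ := (p : ℚ) ^ (steps σ (σ β) β + 1)
  have hq : 0 < 1 + q := by positivity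
  have hscale : -e β = (1 + q)⁻¹ • (-e β - q • e β) := by
    rw [eq_inv_smul_iff₀ hq.ne']
    module
  rw [hscale]
  exact smul_mem_cone (by positivity) hmem

theorem gvec_mem_D (σ : Equiv.Perm B) (p : ℕ) (T : Set B) (β : B) : gvec σ p T β ∈ D σ p T := by
  rw [gvec]
  split_ifs with hβ hsub hβt
  · exact subset_cone _ (Or.inr ⟨β, hβ, Or.inl rfl⟩)
  · exact neg_e_mem_D hβ (hsub (sameOrbit_refl σ β))
  · have hsteps := steps_apply_pow_nn hsub (Or.inl (apply_mem_of_mem_tilde hβ hβt))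
    have hexit := notMem_of_notMem_tilde (isLeast_nn hsub).1.2
    have hmem := neg_e_sub_smul_e_mem_D (p := p) hβ hβt hexit (sameOrbit_pow σ _ β)
    rwa [hsteps, sub_eq_add_neg, ← neg_add] at hmem
  · have hexit := notMem_of_notMem_tilde (isLeast_nn hsub).1.2
    refine subset_cone _ (Or.inl ⟨_, β, hexit, Or.inl hβt, (sameOrbit_pow σ _ β).symm, ?_⟩)
    rw [fH, hvec, steps_pow_nn hsub]

end Membership

end GO

theorem statement2_general {B : Type*} [Finite B] [DecidableEq B] (σ : Equiv.Perm B) {p : ℕ}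
    (hp : 1 < p) (T : Set B) :
    GO.D σ p T = {κ : B → ℚ | ∀ β, β ∉ T → 0 ≤ GO.LT σ p T β κ} := by
  have hD : GO.D σ p T = {κ : B → ℚ | ∀ β ∉ T, 0 ≤ GO.faceForm σ p T β κ} :=
    GO.cone_eq_setOf_dual_nonneg (GO.span_range_gvec σ hp T) (GO.gvec_mem_D σ p T)
      (fun _ hβ ↦ GO.neg_gvec_mem_D hβ)
      (fun _ hδ _ hv ↦ GO.faceForm_nonneg_of_mem_Dgen (zero_lt_one.trans hp) hδ hv)
      (fun _ hδ _ hne ↦ GO.faceForm_gvec_eq_zero hδ hne)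
      (fun _ hδ ↦ GO.faceForm_gvec_self_pos hp hδ)
  rw [hD]
  exact Set.ext fun κ ↦ forall₂_congr fun β hβ ↦ by rw [GO.LT_eq_faceForm hβ]

/-- For every `T ⊆ 𝔹`, `𝒟_T = {κ ∈ ℚ^𝔹 : L_{T,β}(κ) ≥ 0 for all β ∈ 𝔹 − T}`. -/
theorem statement2 {B : Type*} [Fintype B] [DecidableEq B] [Nonempty B]
    (σ : Equiv.Perm B) (p : ℕ) (hp : p.Prime) (T : Set B) :
    GO.D σ p T = {κ : B → ℚ | ∀ β, β ∉ T → 0 ≤ GO.LT σ p T β κ} :=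
  statement2_general σ hp.one_lt T
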